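/- If U is the product of a canonical form of T-count n, then the least denominator exponent of the quadrant Û₊₊ of its adjoint representation is exactly 2n. -/

import Mathlib

open Matrix Complex

noncomputable section

/-- ω = exp(2πi/3), a primitive third root of unity. -/
def ω : ℂ := exp (2 * Real.pi * I / 3)

/-- ζ = exp(2πi/9), a primitive ninth root of unity. -/
def ζ : ℂ := exp (2 * Real.pi * I / 9)

/-- The qutrit Pauli X matrix. -/
def Xmat : Matrix (Fin 3) (Fin 3) ℂ := !![0,0,1; 1,0,0; 0,1,0]

/-- The qutrit Pauli Z matrix. -/
def Zmat : Matrix (Fin 3) (Fin 3) ℂ := !![1,0,0; 0,ω,0; 0,0,ω^2]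

/-- The qutrit Hadamard matrix H = (1/(i√3))·[[1,1,1],[1,ω,ω²],[1,ω²,ω]]. -/
def Hmat : Matrix (Fin 3) (Fin 3) ℂ :=
  (I * (Real.sqrt 3 : ℂ))⁻¹ • !![1,1,1; 1,ω,ω^2; 1,ω^2,ω]

/-- The qutrit phase matrix S = ζ⁸·diag(1,1,ω). -/
def Smat : Matrix (Fin 3) (Fin 3) ℂ := ζ^8 • !![1,0,0; 0,1,0; 0,0,ω]

/-- The qutrit T matrix T = diag(1,ζ,ζ⁸). -/
def Tmat : Matrix (Fin 3) (Fin 3) ℂ := !![1,0,0; 0,ζ,0; 0,0,ζ^8]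

lemma omega_ne_zero : ω ≠ 0 := Complex.exp_ne_zero _
lemma zeta_ne_zero : ζ ≠ 0 := Complex.exp_ne_zero _

lemma omega_im_pos : 0 < ω.im := by
  have h : ω = Complex.exp ((2 * Real.pi / 3 : ℝ) * I) := by
    rw [ω]; push_cast; ring_nf
  rw [h, Complex.exp_ofReal_mul_I_im]
  apply Real.sin_pos_of_pos_of_lt_pi
  · positivity
  · nlinarith [Real.pi_pos]

lemma omega_ne_one : ω ≠ 1 := by
  intro h
  have := omega_im_pos
  rw [h] at this
  simp at this

lemma omega_cube : ω ^ 3 = 1 := by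
  rw [ω, ← Complex.exp_nat_mul]
  rw [show (3:ℕ) * (2 * Real.pi * I / 3) = 2 * Real.pi * I by push_cast; ring]
  exact Complex.exp_two_pi_mul_I

lemma detX : Xmat.det ≠ 0 := by
  simp [Xmat, Matrix.det_fin_three]

lemma detZ : Zmat.det ≠ 0 := by
  simp [Zmat, Matrix.det_fin_three, omega_ne_zero]

lemma detS : Smat.det ≠ 0 := by
  simp [Smat, Matrix.det_fin_three, omega_ne_zero, zeta_ne_zero]

lemma detT : Tmat.det ≠ 0 := by
  simp [Tmat, Matrix.det_fin_three, zeta_ne_zero]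

lemma detH : Hmat.det ≠ 0 := by
  rw [Hmat, Matrix.det_smul]
  apply mul_ne_zero
  · apply pow_ne_zero
    apply inv_ne_zero
    apply mul_ne_zero Complex.I_ne_zero
    simp [Complex.ofReal_ne_zero]
  · rw [Matrix.det_fin_three]
    simp [Matrix.vecHead, Matrix.vecTail]
    intro h
    have h3 : ω ^ 3 = 1 := omega_cube
    have key : 3 * ω * (ω - 1) = 0 := by linear_combination h + ω * h3
    rcases mul_eq_zero.mp key with h' | h'
    · rcases mul_eq_zero.mp h' with h'' | h''
      · norm_num at h''
      · exact omega_ne_zero h''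
    · exact omega_ne_one (by linear_combination h')

/-- X as an element of GL(3, ℂ). -/
def Xg : GL (Fin 3) ℂ := Matrix.GeneralLinearGroup.mkOfDetNeZero Xmat detX

/-- Z as an element of GL(3, ℂ). -/
def Zg : GL (Fin 3) ℂ := Matrix.GeneralLinearGroup.mkOfDetNeZero Zmat detZ

/-- H as an element of GL(3, ℂ). -/
def Hg : GL (Fin 3) ℂ := Matrix.GeneralLinearGroup.mkOfDetNeZero Hmat detH

/-- S as an element of GL(3, ℂ). -/
def Sg : GL (Fin 3) ℂ := Matrix.GeneralLinearGroup.mkOfDetNeZero Smat detS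

/-- T as an element of GL(3, ℂ). -/
def Tg : GL (Fin 3) ℂ := Matrix.GeneralLinearGroup.mkOfDetNeZero Tmat detT

/-- The Clifford group 𝒞: the subgroup of GL(3,ℂ) generated by H and S. -/
def Cliff : Subgroup (GL (Fin 3) ℂ) := Subgroup.closure {Hg, Sg}

/-- The Clifford+T group: the subgroup of GL(3,ℂ) generated by H, S and T. -/
def CliffT : Subgroup (GL (Fin 3) ℂ) := Subgroup.closure {Hg, Sg, Tg}

/-- The subgroup 𝒮 of GL(3,ℂ) generated by S and X. -/
def Sgrp : Subgroup (GL (Fin 3) ℂ) := Subgroup.closure {Sg, Xg}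

/-- Letters of words over the alphabet {H, S, T}. -/
inductive Letter : Type
  | H : Letter
  | S : Letter
  | T : Letter
  deriving DecidableEq

/-- The gate associated to a letter. -/
def Letter.g : Letter → GL (Fin 3) ℂ
  | .H => Hg
  | .S => Sg
  | .T => Tg

/-- The product of the letters of a word. -/
def wordProd (w : List Letter) : GL (Fin 3) ℂ := (w.map Letter.g).prod

/-- The allowed prefixes of a canonical form: ε, T, H²T. -/
def Prefixes : Set (List Letter) := {[], [.T], [.H, .H, .T]}

/-- The allowed syllables of a canonical form: HT, H³T, SHT, SH³T, S²HT, S²H³T. -/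
def Syllables : Set (List Letter) :=
  {[.H, .T], [.H, .H, .H, .T], [.S, .H, .T],
   [.S, .H, .H, .H, .T], [.S, .S, .H, .T], [.S, .S, .H, .H, .H, .T]}

/-- The T-count of a canonical form with prefix `p` and syllable list `ss`:
`k` if the prefix is empty and `k+1` otherwise, where `k` is the number of syllables. -/
def TCount (p : List Letter) (ss : List (List Letter)) : ℕ :=
  ss.length + (if p = [] then 0 else 1)

/-- P₊ = (P + P²)/√6. -/
def Pplus (P : Matrix (Fin 3) (Fin 3) ℂ) : Matrix (Fin 3) (Fin 3) ℂ :=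
  ((Real.sqrt 6 : ℂ))⁻¹ • (P + P ^ 2)

/-- P₋ = i(P − P²)/√6. -/
def Pminus (P : Matrix (Fin 3) (Fin 3) ℂ) : Matrix (Fin 3) (Fin 3) ℂ :=
  (I * ((Real.sqrt 6 : ℂ))⁻¹) • (P - P ^ 2)

/-- The ordered tuple (Q₁, …, Q₈) = (Z₊, X₊, (XZ)₊, (XZ²)₊, Z₋, X₋, (XZ)₋, (XZ²)₋). -/
def Q : Fin 8 → Matrix (Fin 3) (Fin 3) ℂ :=
  ![Pplus Zmat, Pplus Xmat, Pplus (Xmat * Zmat), Pplus (Xmat * Zmat ^ 2),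
    Pminus Zmat, Pminus Xmat, Pminus (Xmat * Zmat), Pminus (Xmat * Zmat ^ 2)]

/-- The adjoint representation Û of U, the 8×8 real matrix with
entries Û_{ij} = tr(Qᵢ U Qⱼ U†). -/
def adj (U : Matrix (Fin 3) (Fin 3) ℂ) : Matrix (Fin 8) (Fin 8) ℝ :=
  Matrix.of fun i j => (Matrix.trace (Q i * U * Q j * Uᴴ)).re

/-- The top-left 4×4 quadrant Û₊₊. -/
def blockPP (A : Matrix (Fin 8) (Fin 8) ℝ) : Matrix (Fin 4) (Fin 4) ℝ :=
  Matrix.of fun i j => A ⟨i.val, by omega⟩ ⟨j.val, by omega⟩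

/-- The top-right 4×4 quadrant Û₊₋. -/
def blockPM (A : Matrix (Fin 8) (Fin 8) ℝ) : Matrix (Fin 4) (Fin 4) ℝ :=
  Matrix.of fun i j => A ⟨i.val, by omega⟩ ⟨j.val + 4, by omega⟩

/-- The bottom-left 4×4 quadrant Û₋₊. -/
def blockMP (A : Matrix (Fin 8) (Fin 8) ℝ) : Matrix (Fin 4) (Fin 4) ℝ :=
  Matrix.of fun i j => A ⟨i.val + 4, by omega⟩ ⟨j.val, by omega⟩

/-- The bottom-right 4×4 quadrant Û₋₋. -/
def blockMM (A : Matrix (Fin 8) (Fin 8) ℝ) : Matrix (Fin 4) (Fin 4) ℝ :=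
  Matrix.of fun i j => A ⟨i.val + 4, by omega⟩ ⟨j.val + 4, by omega⟩

/-- α = sin(2π/9). -/
def αR : ℝ := Real.sin (2 * Real.pi / 9)

/-- The ring ℤ[α]: the subring of ℝ generated by 1/2 and α. -/
def Zα : Subring ℝ := Subring.closure {1/2, αR}

/-- The ring ℤ[1/2, 1/α]: the subring of ℝ generated by 1/2, α and α⁻¹. -/
def Zhα : Subring ℝ := Subring.closure {1/2, αR, αR⁻¹}

lemma alpha_mem_Zα : αR ∈ Zα := Subring.subset_closure (by simp)

set_option linter.all false

/-! ### Basic arithmetic of `ζ` and `β = sin² (2π/9)` -/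

def bC : ℂ := (2 - ζ ^ 2 + ζ + ζ ^ 4) / 4

lemma omega_eq : ω = ζ ^ 3 := by
  rw [ω, ζ, ← Complex.exp_nat_mul]; congr 1; push_cast; ring

lemma omega_rel : ω ^ 2 + ω + 1 = 0 := by
  have h : (ω - 1) * (ω ^ 2 + ω + 1) = 0 := by linear_combination omega_cube
  rcases mul_eq_zero.mp h with h | h
  · exact absurd (by linear_combination h) omega_ne_one
  · exact h

lemma zeta_rel : ζ ^ 6 + ζ ^ 3 + 1 = 0 := by
  have := omega_rel
  rw [omega_eq] at this
  linear_combination this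

lemma alpha_sq : ((αR ^ 2 : ℝ) : ℂ) = bC := by
  have h1 : ζ = exp (((2 * Real.pi / 9 : ℝ) : ℂ) * I) := by
    rw [ζ]; congr 1; push_cast; ring
  have h2 : exp (-((2 * Real.pi / 9 : ℝ) : ℂ) * I) = ζ ^ 8 := by
    have h3 : exp (-((2 * Real.pi / 9 : ℝ) : ℂ) * I) * ζ = 1 := by
      rw [h1, ← Complex.exp_add]; simp
    apply mul_right_cancel₀ zeta_ne_zero
    rw [h3]
    linear_combination -(ζ ^ 3 - 1) * zeta_rel
  have h4 : (αR : ℂ) = (ζ ^ 8 - ζ) * I / 2 := by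
    rw [αR, Complex.ofReal_sin, Complex.sin, h2, ← h1]
  push_cast
  rw [h4, bC]
  have hI := Complex.I_sq
  have h9 : ζ ^ 9 = 1 := by linear_combination (ζ ^ 3 - 1) * zeta_rel
  grind [zeta_rel]

/-! ### The lattice basis -/

def Rp (P : Matrix (Fin 3) (Fin 3) ℂ) : Matrix (Fin 3) (Fin 3) ℂ := P + P ^ 2
def Rm (P : Matrix (Fin 3) (Fin 3) ℂ) : Matrix (Fin 3) (Fin 3) ℂ := (2 * ω + 1) • (P - P ^ 2)

def Bm : Fin 8 → Matrix (Fin 3) (Fin 3) ℂ :=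
  ![bC ^ 2 • Rp Zmat, bC ^ 2 • Rp Xmat, bC ^ 2 • Rp (Xmat * Zmat), bC ^ 2 • Rp (Xmat * Zmat ^ 2),
    Rm Xmat + Rm (Xmat * Zmat) + Rm (Xmat * Zmat ^ 2),
    Rm Zmat + Rm (Xmat * Zmat) - Rm (Xmat * Zmat ^ 2),
    bC ^ 2 • Rm (Xmat * Zmat), bC ^ 2 • Rm (Xmat * Zmat ^ 2)]

lemma bC_sq : bC ^ 2 = (6 + 4 * ζ - 4 * ζ ^ 2 + 5 * ζ ^ 4 + ζ ^ 5) / 16 := by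
  rw [bC]
  grind [zeta_rel]

lemma RpZ : Rp Zmat = !![2, 0, 0; 0, -1, 0; 0, 0, -1] := by
  have := omega_rel
  ext i j; fin_cases i <;> fin_cases j <;> simp [Rp, Zmat, pow_two, Matrix.mul_apply, Fin.sum_univ_three] <;> grind

lemma RpX : Rp Xmat = !![0, 1, 1; 1, 0, 1; 1, 1, 0] := by
  ext i j; fin_cases i <;> fin_cases j <;> simp [Rp, Xmat, pow_two, Matrix.mul_apply, Fin.sum_univ_three]

lemma RpXZ : Rp (Xmat * Zmat) = !![0, 1, ω ^ 2; 1, 0, ω ^ 2; ω, ω, 0] := by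
  have := omega_cube
  ext i j; fin_cases i <;> fin_cases j <;> simp [Rp, Xmat, Zmat, pow_two, Matrix.mul_apply, Fin.sum_univ_three] <;> grind

lemma RpXZZ : Rp (Xmat * Zmat ^ 2) = !![0, 1, ω; 1, 0, ω; ω ^ 2, ω ^ 2, 0] := by
  have := omega_cube
  ext i j; fin_cases i <;> fin_cases j <;> simp [Rp, Xmat, Zmat, pow_two, Matrix.mul_apply, Fin.sum_univ_three] <;> grind

lemma RmZ : Rm Zmat = !![0, 0, 0; 0, -3, 0; 0, 0, 3] := by
  have := omega_rel
  ext i j; fin_cases i <;> fin_cases j <;> simp [Rm, Zmat, pow_two, Matrix.mul_apply, Fin.sum_univ_three] <;> grind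

lemma RmX : Rm Xmat = (2 * ω + 1) • !![0, -1, 1; 1, 0, -1; -1, 1, 0] := by
  rw [Rm]; congr 1
  ext i j; fin_cases i <;> fin_cases j <;> simp [Xmat, pow_two, Matrix.mul_apply, Fin.sum_univ_three]

lemma RmXZ : Rm (Xmat * Zmat) = (2 * ω + 1) • !![0, -1, ω ^ 2; 1, 0, -ω ^ 2; -ω, ω, 0] := by
  have := omega_cube
  rw [Rm]; congr 1
  ext i j; fin_cases i <;> fin_cases j <;> simp [Xmat, Zmat, pow_two, Matrix.mul_apply, Fin.sum_univ_three] <;> grind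

lemma RmXZZ : Rm (Xmat * Zmat ^ 2) = (2 * ω + 1) • !![0, -1, ω; 1, 0, -ω; -ω ^ 2, ω ^ 2, 0] := by
  have := omega_cube
  rw [Rm]; congr 1
  ext i j; fin_cases i <;> fin_cases j <;> simp [Xmat, Zmat, pow_two, Matrix.mul_apply, Fin.sum_univ_three] <;> grind


/-! ### The residue relation -/

lemma half_mem : (1 / 2 : ℝ) ∈ Zα := Subring.subset_closure (by simp)

lemma alpha_poly : 64 * αR ^ 6 = 3 * (32 * αR ^ 4 - 12 * αR ^ 2 + 1) := by
  have h : ((64 * (αR ^ 2) ^ 3 : ℝ) : ℂ)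
      = ((3 * (32 * (αR ^ 2) ^ 2 - 12 * αR ^ 2 + 1) : ℝ) : ℂ) := by
    have e := alpha_sq
    push_cast at e ⊢
    rw [e, bC]
    grind [zeta_rel]
  have h' := Complex.ofReal_injective h
  linear_combination h'

lemma alpha_ne_zero : αR ≠ 0 := by
  intro h
  have := alpha_poly
  rw [h] at this
  norm_num at this

lemma three_mem : ∃ y ∈ Zα, (3 : ℝ) = αR * y := by
  refine ⟨αR * (64 * αR ^ 4 - 96 * αR ^ 2 + 36), ?_, by linear_combination -alpha_poly⟩
  have a := alpha_mem_Zα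
  have k : ∀ n : ℕ, (n : ℝ) ∈ Zα := fun n => natCast_mem Zα n
  refine mul_mem a (add_mem (sub_mem (mul_mem ?_ (pow_mem a 4)) (mul_mem ?_ (pow_mem a 2))) ?_)
  · exact_mod_cast k 64
  · exact_mod_cast k 96
  · exact_mod_cast k 36

lemma integral_of_mem {x : ℝ} (hx : x ∈ Zα) : ∃ k : ℕ, IsIntegral ℤ (2 ^ k * x) := by
  have i2 : IsIntegral ℤ (2 : ℝ) := by
    have := isIntegral_algebraMap (R := ℤ) (A := ℝ) (x := 2)
    simpa using this
  rw [Zα] at hx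
  induction hx using Subring.closure_induction with
  | mem x h =>
    rcases h with rfl | h
    · exact ⟨1, by norm_num; exact isIntegral_one⟩
    · rw [Set.mem_singleton_iff] at h
      subst h
      refine ⟨1, Polynomial.X ^ 6 - 6 * Polynomial.X ^ 4 + 9 * Polynomial.X ^ 2 - 3, ?_, ?_⟩
      · monicity!
      · simp [Polynomial.eval₂_mul, Polynomial.eval₂_pow]
        linear_combination alpha_poly
  | zero => exact ⟨0, by simpa using isIntegral_zero⟩
  | one => exact ⟨0, by simpa using isIntegral_one⟩
  | add x y _ _ h1 h2 =>
    obtain ⟨k, hk⟩ := h1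
    obtain ⟨l, hl⟩ := h2
    refine ⟨k + l, ?_⟩
    have : (2 : ℝ) ^ (k + l) * (x + y) = 2 ^ l * (2 ^ k * x) + 2 ^ k * (2 ^ l * y) := by ring
    rw [this]
    exact ((i2.pow l).mul hk).add ((i2.pow k).mul hl)
  | neg x _ h1 =>
    obtain ⟨k, hk⟩ := h1
    exact ⟨k, by simpa using hk.neg⟩
  | mul x y _ _ h1 h2 =>
    obtain ⟨k, hk⟩ := h1
    obtain ⟨l, hl⟩ := h2
    refine ⟨k + l, ?_⟩
    have : (2 : ℝ) ^ (k + l) * (x * y) = (2 ^ k * x) * (2 ^ l * y) := by ring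
    rw [this]
    exact hk.mul hl

lemma one_not_mem : ¬ ∃ y ∈ Zα, (1 : ℝ) = αR * y := by
  rintro ⟨y, hy, h⟩
  have k : ∀ n : ℕ, (n : ℝ) ∈ Zα := fun n => natCast_mem Zα n
  have a := alpha_mem_Zα
  have h3 : (1 / 3 : ℝ) ∈ Zα := by
    have e : (1 / 3 : ℝ) = (32 * αR ^ 4 - 12 * αR ^ 2 + 1) * y ^ 6 * (1 / 2) ^ 6 := by
      have e1 : (αR * y) ^ 6 = 1 := by rw [← h]; norm_num
      have e2 := alpha_poly
      linear_combination -(1 / 3 : ℝ) * e1 + y ^ 6 / 192 * e2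
    rw [e]
    refine mul_mem (mul_mem (add_mem (sub_mem (mul_mem ?_ (pow_mem a 4)) (mul_mem ?_ (pow_mem a 2)))
      (one_mem _)) (pow_mem hy 6)) (pow_mem half_mem 6)
    · exact_mod_cast k 32
    · exact_mod_cast k 12
  obtain ⟨m, hm⟩ := integral_of_mem h3
  have hq : IsIntegral ℤ ((2 : ℚ) ^ m * (1 / 3)) := by
    have : ((2 : ℝ) ^ m * (1 / 3)) = algebraMap ℚ ℝ ((2 : ℚ) ^ m * (1 / 3)) := by simp
    rw [this] at hm
    exact (isIntegral_algebraMap_iff (algebraMap ℚ ℝ).injective).mp hm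
  obtain ⟨z, hz⟩ := IsIntegrallyClosed.isIntegral_iff.mp hq
  have hz' : (3 * z : ℤ) = 2 ^ m := by
    have : (3 * z : ℚ) = 2 ^ m := by
      simp at hz
      rw [hz]; ring
    exact_mod_cast this
  have hd : (3 : ℤ) ∣ 2 ^ m := ⟨z, hz'.symm⟩
  have := Int.Prime.dvd_pow' (p := 3) (by norm_num) hd
  norm_num at this

/-- `x ∈ ℤ[α]` has residue `m` modulo `α`. -/
def Res (x : ℝ) (m : ZMod 3) : Prop := ∃ a : ℤ, (a : ZMod 3) = m ∧ ∃ y ∈ Zα, x = a + αR * y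

lemma Res.mem {x : ℝ} {m : ZMod 3} (h : Res x m) : x ∈ Zα := by
  obtain ⟨a, -, y, hy, rfl⟩ := h
  exact add_mem (intCast_mem _ a) (mul_mem alpha_mem_Zα hy)

lemma Res.add {x y : ℝ} {m n : ZMod 3} (h : Res x m) (h' : Res y n) : Res (x + y) (m + n) := by
  obtain ⟨a, rfl, u, hu, rfl⟩ := h
  obtain ⟨b, rfl, v, hv, rfl⟩ := h'
  exact ⟨a + b, by push_cast; ring, u + v, add_mem hu hv, by push_cast; ring⟩

lemma Res.mul {x y : ℝ} {m n : ZMod 3} (h : Res x m) (h' : Res y n) : Res (x * y) (m * n) := by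
  obtain ⟨a, rfl, u, hu, rfl⟩ := h
  obtain ⟨b, rfl, v, hv, rfl⟩ := h'
  refine ⟨a * b, by push_cast; ring, a * v + u * b + αR * (u * v), ?_, by push_cast; ring⟩
  exact add_mem (add_mem (mul_mem (intCast_mem _ a) hv) (mul_mem hu (intCast_mem _ b)))
    (mul_mem alpha_mem_Zα (mul_mem hu hv))

lemma Res.int (a : ℤ) : Res a a := ⟨a, rfl, 0, zero_mem _, by ring⟩

lemma Res.zero : Res 0 0 := by simpa using Res.int 0

lemma Res.one : Res 1 1 := by simpa using Res.int 1

lemma Res.alpha_mul {y : ℝ} (hy : y ∈ Zα) : Res (αR * y) 0 := ⟨0, by simp, y, hy, by simp⟩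

lemma Res.half : Res (1 / 2) 2 := by
  obtain ⟨y, hy, h⟩ := three_mem
  refine ⟨2, rfl, -(1 / 2 * y), neg_mem (mul_mem half_mem hy), ?_⟩
  push_cast
  linear_combination -(1 / 2 : ℝ) * h

lemma Res.sum {ι : Type*} (s : Finset ι) (x : ι → ℝ) (m : ι → ZMod 3)
    (h : ∀ i, Res (x i) (m i)) : Res (∑ i ∈ s, x i) (∑ i ∈ s, m i) := by
  classical
  induction s using Finset.induction_on with
  | empty => simpa using Res.zero
  | insert a s ha ih =>
    rw [Finset.sum_insert ha, Finset.sum_insert ha]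
    exact (h a).add ih

lemma Res.unique {x : ℝ} {m : ZMod 3} (h : Res x m) (h0 : ∃ y ∈ Zα, x = αR * y) : m = 0 := by
  obtain ⟨a, rfl, u, hu, rfl⟩ := h
  obtain ⟨y, hy, h0⟩ := h0
  by_contra hne
  have hnd : ¬ ((3 : ℕ) : ℤ) ∣ a := fun hd => hne ((ZMod.intCast_zmod_eq_zero_iff_dvd a 3).mpr hd)
  have hcop : IsCoprime ((3 : ℕ) : ℤ) a :=
    (Nat.prime_iff_prime_int.mp Nat.prime_three).irreducible.coprime_iff_not_dvd.mpr hnd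
  obtain ⟨p, q, hpq⟩ := hcop
  obtain ⟨t, ht, h3⟩ := three_mem
  have hpq' : (p : ℝ) * 3 + q * a = 1 := by exact_mod_cast hpq
  refine one_not_mem ⟨p * t + q * (y - u), ?_, ?_⟩
  · exact add_mem (mul_mem (intCast_mem _ p) ht) (mul_mem (intCast_mem _ q) (sub_mem hy hu))
  · linear_combination -hpq' + p * h3 + q * h0

/-- The real matrix with entries `(a + b β + c β²) / 128`, `β = α²`. -/
def toR (a b c : Matrix (Fin 8) (Fin 8) ℤ) : Matrix (Fin 8) (Fin 8) ℝ :=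
  Matrix.of fun i j => (a i j + b i j * αR ^ 2 + c i j * (αR ^ 2) ^ 2) / 128

def toM (a : Matrix (Fin 8) (Fin 8) ℤ) : Matrix (Fin 8) (Fin 8) (ZMod 3) :=
  Matrix.of fun i j => 2 * (a i j : ZMod 3)

lemma res_toR (a b c : Matrix (Fin 8) (Fin 8) ℤ) (i j : Fin 8) :
    Res (toR a b c i j) (toM a i j) := by
  have hh : Res ((1 / 2) ^ 7) 2 := by
    have h2 := Res.half.mul Res.half
    have h4 := h2.mul h2
    have h7 := (h4.mul h2).mul Res.half
    have e : (2 * 2 * (2 * 2) * (2 * 2) * 2 : ZMod 3) = 2 := by decide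
    rw [e] at h7
    convert h7 using 1
    ring
  have hb : Res (αR ^ 2) 0 := by
    rw [pow_two]; exact Res.alpha_mul alpha_mem_Zα
  have := ((Res.int (a i j)).add ((Res.int (b i j)).mul hb)).add
    ((Res.int (c i j)).mul (hb.mul hb))
  have := hh.mul this
  convert this using 1
  · simp only [toR, Matrix.of_apply]; ring
  · simp [toM]


/-! ### Explicit matrices of the generators in the lattice basis -/

def coHa : Matrix (Fin 8) (Fin 8) ℤ :=
  !![0, 128, 0, 0, 0, 0, 0, 0;
    128, 0, 0, 0, 0, 0, 0, 0;
    0, 0, 0, -64, -21504, 21504, 0, -192;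
    0, 0, 128, 0, 0, 0, 0, 0;
    0, 0, 0, 0, 0, -128, 0, 0;
    0, 0, 0, 0, 128, 0, 0, 0;
    0, 0, 0, 64, -21504, 21504, 0, -64;
    0, 0, 0, 0, 0, 0, -128, 0]

def coHb : Matrix (Fin 8) (Fin 8) ℤ :=
  !![0, 0, 0, 0, 0, 0, 0, 0;
    0, 0, 0, 0, 0, 0, 0, 0;
    0, 0, 0, 0, 69632, -69632, 0, 0;
    0, 0, 0, 0, 0, 0, 0, 0;
    0, 0, 0, 0, 0, 0, 0, 0;
    0, 0, 0, 0, 0, 0, 0, 0;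
    0, 0, 0, 0, 69632, -69632, 0, 0;
    0, 0, 0, 0, 0, 0, 0, 0]

def coHc : Matrix (Fin 8) (Fin 8) ℤ :=
  !![0, 0, 0, 0, 0, 0, 0, 0;
    0, 0, 0, 0, 0, 0, 0, 0;
    0, 0, 0, 0, -49152, 49152, 0, 0;
    0, 0, 0, 0, 0, 0, 0, 0;
    0, 0, 0, 0, 0, 0, 0, 0;
    0, 0, 0, 0, 0, 0, 0, 0;
    0, 0, 0, 0, -49152, 49152, 0, 0;
    0, 0, 0, 0, 0, 0, 0, 0]

def coSa : Matrix (Fin 8) (Fin 8) ℤ :=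
  !![128, 0, 0, 0, 0, 0, 0, 0;
    0, 0, 0, 128, 0, 0, 0, 0;
    0, 128, 0, 0, 0, 0, 0, 0;
    0, 0, 128, 0, 0, 0, 0, 0;
    0, 0, 0, 0, 128, -128, 0, 0;
    0, 0, 0, 0, 0, 128, 0, 0;
    0, 0, 0, 0, 0, 0, 0, -128;
    0, 0, 0, 0, 0, 43008, 128, -128]

def coSb : Matrix (Fin 8) (Fin 8) ℤ :=
  !![0, 0, 0, 0, 0, 0, 0, 0;
    0, 0, 0, 0, 0, 0, 0, 0;
    0, 0, 0, 0, 0, 0, 0, 0;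
    0, 0, 0, 0, 0, 0, 0, 0;
    0, 0, 0, 0, 0, 0, 0, 0;
    0, 0, 0, 0, 0, 0, 0, 0;
    0, 0, 0, 0, 0, 0, 0, 0;
    0, 0, 0, 0, 0, -139264, 0, 0]

def coSc : Matrix (Fin 8) (Fin 8) ℤ :=
  !![0, 0, 0, 0, 0, 0, 0, 0;
    0, 0, 0, 0, 0, 0, 0, 0;
    0, 0, 0, 0, 0, 0, 0, 0;
    0, 0, 0, 0, 0, 0, 0, 0;
    0, 0, 0, 0, 0, 0, 0, 128;
    0, 0, 0, 0, 0, 0, 0, 0;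
    0, 0, 0, 0, 0, 0, 0, 0;
    0, 0, 0, 0, 0, 98304, 0, 0]

def coTa : Matrix (Fin 8) (Fin 8) ℤ :=
  !![0, 0, 0, 0, 0, 0, 0, 0;
    0, -32, -32, 16, -768, -3072, 0, 48;
    0, 16, -32, -32, -768, 0, 0, 0;
    0, -32, 16, -32, -768, 3072, 48, 0;
    0, -4, -4, -1, -48, -48, -6, 9;
    0, 0, 0, 0, 0, 0, 0, 0;
    0, -16, 0, 16, 0, -1024, 0, -48;
    0, 0, -16, 16, 0, 2560, 48, -48]

def coTb : Matrix (Fin 8) (Fin 8) ℤ :=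
  !![128, 0, 0, 0, 0, 0, 0, 0;
    0, 256, 256, -192, 1024, 11264, -128, -320;
    0, -192, 256, 256, 1024, 0, -128, -128;
    0, 256, -192, 256, 1024, -11264, -320, -128;
    0, 44, 44, 8, 320, 448, 60, -96;
    0, 0, 0, 0, 0, 128, 0, 0;
    0, 64, 0, -64, 0, 1024, 0, 448;
    0, 0, 64, -64, 0, -10240, -448, 448]

def coTc : Matrix (Fin 8) (Fin 8) ℤ :=
  !![0, 0, 0, 0, 0, 0, 0, 0;
    0, -256, -256, 256, 0, -8192, 256, 256;
    0, 256, -256, -256, 0, 0, 256, 256;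
    0, -256, 256, -256, 0, 8192, 256, 256;
    0, -80, -80, 0, -256, -512, -80, 160;
    0, 0, 0, 0, 0, 0, 0, 0;
    0, 0, 0, 0, 0, 0, 0, -512;
    0, 0, 0, 0, 0, 8192, 512, -512]

def cf (a b c : Matrix (Fin 8) (Fin 8) ℤ) (i j : Fin 8) : ℂ :=
  (a i j + b i j * bC + c i j * bC ^ 2) / 128

def Fmat : Matrix (Fin 3) (Fin 3) ℂ := !![1,1,1; 1,ω,ω^2; 1,ω^2,ω]
def Dmat : Matrix (Fin 3) (Fin 3) ℂ := !![1,0,0; 0,1,0; 0,0,ω]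


lemma cf_eq (a b c : Matrix (Fin 8) (Fin 8) ℤ) (i j : Fin 8) : cf a b c i j =
    (a i j + b i j * ((2 - ζ ^ 2 + ζ + ζ ^ 4) / 4)
      + c i j * ((6 + 4 * ζ - 4 * ζ ^ 2 + 5 * ζ ^ 4 + ζ ^ 5) / 16)) / 128 := by
  rw [cf, bC_sq, bC]

set_option maxHeartbeats 8000000 in
lemma idT (j : Fin 8) : bC • (Tmat * Bm j) = (∑ i, cf coTa coTb coTc i j • Bm i) * Tmat := by
  have h := zeta_rel
  simp only [Fin.sum_univ_eight, cf_eq]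
  fin_cases j <;>
    simp [Bm, coTa, coTb, coTc, RpZ, RpX, RpXZ, RpXZZ, RmZ, RmX, RmXZ, RmXZZ, Tmat, omega_eq] <;>
    simp only [bC_sq, bC] <;> and_intros <;> clear * - h <;> generalize ζ = z at * <;> grind

set_option maxHeartbeats 8000000 in
lemma idF (j : Fin 8) : Fmat * Bm j = (∑ i, cf coHa coHb coHc i j • Bm i) * Fmat := by
  have h := zeta_rel
  simp only [Fin.sum_univ_eight, cf_eq]
  fin_cases j <;>
    simp [Bm, coHa, coHb, coHc, RpZ, RpX, RpXZ, RpXZZ, RmZ, RmX, RmXZ, RmXZZ, Fmat, omega_eq] <;>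
    simp only [bC_sq, bC] <;> and_intros <;> clear * - h <;> generalize ζ = z at * <;> grind

set_option maxHeartbeats 8000000 in
lemma idD (j : Fin 8) : Dmat * Bm j = (∑ i, cf coSa coSb coSc i j • Bm i) * Dmat := by
  have h := zeta_rel
  simp only [Fin.sum_univ_eight, cf_eq]
  fin_cases j <;>
    (simp [Bm, coSa, coSb, coSc, RpZ, RpX, RpXZ, RpXZZ, RmZ, RmX, RmXZ, RmXZZ, Dmat, omega_eq]
     try simp only [bC_sq, bC]) <;> and_intros <;> clear * - h <;> generalize ζ = z at * <;> grind


/-! ### Expansions in the lattice basis -/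

/-- `β^n U B_j U† = ∑ A_ij B_i`. -/
def Expands (U : Matrix (Fin 3) (Fin 3) ℂ) (n : ℕ) (A : Matrix (Fin 8) (Fin 8) ℝ) : Prop :=
  ∀ j, bC ^ n • (U * Bm j * Uᴴ) = ∑ i, ((A i j : ℝ) : ℂ) • Bm i

lemma expands_one : Expands 1 0 1 := by
  intro j
  simp [Matrix.one_apply, apply_ite, ite_smul]

lemma Expands.mul {U V : Matrix (Fin 3) (Fin 3) ℂ} {n k : ℕ} {A B : Matrix (Fin 8) (Fin 8) ℝ}
    (hU : Expands U n A) (hV : Expands V k B) : Expands (U * V) (n + k) (A * B) := by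
  intro j
  have e : bC ^ (n + k) • (U * V * Bm j * (U * V)ᴴ)
      = bC ^ n • (U * (bC ^ k • (V * Bm j * Vᴴ)) * Uᴴ) := by
    rw [Matrix.conjTranspose_mul, pow_add]
    simp only [Matrix.mul_smul, Matrix.smul_mul, smul_smul, Matrix.mul_assoc]
  rw [e, hV j]
  simp only [Matrix.mul_sum, Matrix.sum_mul, Finset.smul_sum, Matrix.mul_smul, Matrix.smul_mul]
  have e2 : ∀ i, bC ^ n • ((B i j : ℂ) • (U * Bm i * Uᴴ)) = ∑ l, ((B i j : ℂ) * (A l i : ℂ)) • Bm l := by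
    intro i
    rw [smul_comm, hU i, Finset.smul_sum]
    simp only [smul_smul]
  simp only [e2]
  rw [Finset.sum_comm]
  refine Finset.sum_congr rfl fun l _ => ?_
  rw [← Finset.sum_smul]
  congr 1
  simp only [Matrix.mul_apply]
  push_cast
  exact Finset.sum_congr rfl fun i _ => mul_comm _ _

lemma toR_cast (a b c : Matrix (Fin 8) (Fin 8) ℤ) (i j : Fin 8) :
    ((toR a b c i j : ℝ) : ℂ) = cf a b c i j := by
  have := alpha_sq
  push_cast at this
  simp [toR, cf, this]

lemma conj_zeta : (starRingEnd ℂ) ζ = ζ ^ 8 := by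
  have h9 : ζ ^ 9 = 1 := by linear_combination (ζ ^ 3 - 1) * zeta_rel
  have hn : ‖ζ‖ = 1 := by
    have h1 : ζ = exp (((2 * Real.pi / 9 : ℝ) : ℂ) * I) := by
      rw [ζ]; congr 1; push_cast; ring
    rw [h1]; exact Complex.norm_exp_ofReal_mul_I _
  have : ζ * (starRingEnd ℂ) ζ = 1 := by
    rw [Complex.mul_conj, Complex.normSq_eq_norm_sq, hn]; simp
  apply mul_left_cancel₀ zeta_ne_zero
  rw [this]; linear_combination -h9

lemma conj_omega : (starRingEnd ℂ) ω = ω ^ 2 := by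
  rw [omega_eq, map_pow, conj_zeta]
  linear_combination (ζ ^ 15 + ζ ^ 6) * (ζ ^ 3 - 1) * zeta_rel

lemma T_unitary : Tmat * Tmatᴴ = 1 := by
  have h9 : ζ ^ 9 = 1 := by linear_combination (ζ ^ 3 - 1) * zeta_rel
  ext i j; fin_cases i <;> fin_cases j <;>
    simp [Tmat, Matrix.mul_apply, Fin.sum_univ_three, conj_zeta] <;> grind

lemma D_unitary : Dmat * Dmatᴴ = 1 := by
  have := omega_cube
  ext i j; fin_cases i <;> fin_cases j <;>
    simp [Dmat, Matrix.mul_apply, Fin.sum_univ_three, conj_omega] <;> grind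

lemma F_unitary : Fmat * Fmatᴴ = (3 : ℂ) • 1 := by
  have := omega_cube
  have := omega_rel
  ext i j; fin_cases i <;> fin_cases j <;>
    simp [Fmat, Matrix.mul_apply, Fin.sum_univ_three, conj_omega] <;> grind

lemma expands_T : Expands Tmat 1 (toR coTa coTb coTc) := by
  intro j
  rw [pow_one, ← Matrix.smul_mul, idT, Matrix.mul_assoc, T_unitary, Matrix.mul_one]
  simp only [toR_cast]

lemma expands_S : Expands Smat 0 (toR coSa coSb coSc) := by
  intro j
  have e : Smat = ζ ^ 8 • Dmat := rfl
  have e2 : (ζ ^ 8) * (starRingEnd ℂ) (ζ ^ 8) = 1 := by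
    rw [map_pow, conj_zeta]
    have h9 : ζ ^ 9 = 1 := by linear_combination (ζ ^ 3 - 1) * zeta_rel
    calc ζ ^ 8 * (ζ ^ 8) ^ 8 = (ζ ^ 9) ^ 8 := by ring
      _ = 1 := by rw [h9, one_pow]
  rw [e, Matrix.conjTranspose_smul, pow_zero, one_smul, Matrix.smul_mul, Matrix.smul_mul,
    Matrix.mul_smul, smul_smul, Complex.star_def, e2, one_smul, idD, Matrix.mul_assoc, D_unitary,
    Matrix.mul_one]
  simp only [toR_cast]

lemma sqrt3_sq : (Real.sqrt 3 : ℂ) ^ 2 = 3 := by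
  norm_cast
  simp

lemma expands_H : Expands Hmat 0 (toR coHa coHb coHc) := by
  intro j
  have e : Hmat = (I * (Real.sqrt 3 : ℂ))⁻¹ • Fmat := rfl
  have e2 : (I * (Real.sqrt 3 : ℂ))⁻¹ * (starRingEnd ℂ) (I * (Real.sqrt 3 : ℂ))⁻¹ * 3 = 1 := by
    have h0 : (Real.sqrt 3 : ℂ) ≠ 0 := by simp
    rw [map_inv₀, map_mul, Complex.conj_I, Complex.conj_ofReal]
    field_simp
    rw [sqrt3_sq, Complex.I_sq]; norm_num
  rw [e, Matrix.conjTranspose_smul, pow_zero, one_smul, Matrix.smul_mul, Matrix.smul_mul,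
    Matrix.mul_smul, smul_smul, Complex.star_def, idF, Matrix.mul_assoc, F_unitary,
    Matrix.mul_smul, smul_smul, e2, one_smul, Matrix.mul_one]
  simp only [toR_cast]

/-! ### Extracting the `++` block -/

lemma trace_Bm (i : Fin 4) (l : Fin 8) :
    Matrix.trace (Rp (![Zmat, Xmat, Xmat * Zmat, Xmat * Zmat ^ 2] i) * Bm l)
      = if l.val = i.val then 6 * bC ^ 2 else 0 := by
  have h1 := omega_rel
  fin_cases i <;> fin_cases l <;>
    simp [Bm, RpZ, RpX, RpXZ, RpXZZ, RmZ, RmX, RmXZ, RmXZZ, Matrix.trace_fin_three] <;> grind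

lemma Q_eq (i : Fin 4) : Q ⟨i.val, by omega⟩
    = (Real.sqrt 6 : ℂ)⁻¹ • Rp (![Zmat, Xmat, Xmat * Zmat, Xmat * Zmat ^ 2] i) := by
  fin_cases i <;> rfl

lemma Bm_eq (i : Fin 4) : Bm ⟨i.val, by omega⟩
    = bC ^ 2 • Rp (![Zmat, Xmat, Xmat * Zmat, Xmat * Zmat ^ 2] i) := by
  fin_cases i <;> rfl

lemma bC_ne_zero : bC ≠ 0 := by
  rw [← alpha_sq]
  exact_mod_cast pow_ne_zero 2 alpha_ne_zero

lemma sqrt6_sq : (Real.sqrt 6 : ℂ) ^ 2 = 6 := by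
  norm_cast
  simp

lemma block_eq {U : Matrix (Fin 3) (Fin 3) ℂ} {n : ℕ} {A : Matrix (Fin 8) (Fin 8) ℝ}
    (hU : Expands U n A) (i j : Fin 4) :
    αR ^ (2 * n) * blockPP (adj U) i j = A ⟨i.val, by omega⟩ ⟨j.val, by omega⟩ := by
  have h := hU ⟨j.val, by omega⟩
  set R := ![Zmat, Xmat, Xmat * Zmat, Xmat * Zmat ^ 2] with hR
  have h2 := congrArg (fun M => Matrix.trace (Rp (R i) * M)) h
  simp only [Matrix.mul_sum, Matrix.trace_sum, Matrix.mul_smul, Matrix.trace_smul, hR, trace_Bm,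
    smul_eq_mul, Bm_eq, Matrix.smul_mul] at h2
  rw [Finset.sum_eq_single (⟨i.val, by omega⟩ : Fin 8)
    (fun b _ hb => by rw [if_neg (fun hh => hb (Fin.ext hh)), mul_zero]) (by simp), if_pos rfl] at h2
  have h0 : (Real.sqrt 6 : ℂ) ≠ 0 := by simp
  have h3 : Matrix.trace (Q ⟨i.val, by omega⟩ * U * Q ⟨j.val, by omega⟩ * Uᴴ)
      = (6 : ℂ)⁻¹ * Matrix.trace (Rp (R i) * (U * Rp (R j) * Uᴴ)) := by
    rw [Q_eq, Q_eq]
    simp only [Matrix.smul_mul, Matrix.mul_smul, Matrix.trace_smul, smul_eq_mul, Matrix.mul_assoc, hR]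
    rw [← mul_assoc, ← mul_inv, ← pow_two, sqrt6_sq]
  have h4 : bC ^ n * Matrix.trace (Q ⟨i.val, by omega⟩ * U * Q ⟨j.val, by omega⟩ * Uᴴ)
      = (A ⟨i.val, by omega⟩ ⟨j.val, by omega⟩ : ℂ) := by
    rw [h3, hR]
    have hb : bC ^ 2 ≠ 0 := pow_ne_zero 2 bC_ne_zero
    apply mul_left_cancel₀ hb
    linear_combination (6 : ℂ)⁻¹ * h2
  rw [← alpha_sq, ← Complex.ofReal_pow] at h4
  have h5 := congrArg Complex.re h4
  rw [Complex.re_ofReal_mul, Complex.ofReal_re] at h5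
  rw [pow_mul]
  exact h5

/-! ### Rows modulo `α` -/

/-- The rows of the reduction: `w · M = r` where `M` is the reduction of `β^n Û`. -/
def Row (U : GL (Fin 3) ℂ) (n : ℕ) (w r : Fin 8 → ZMod 3) : Prop :=
  ∃ (A : Matrix (Fin 8) (Fin 8) ℝ) (M : Matrix (Fin 8) (Fin 8) (ZMod 3)),
    Expands (U : Matrix (Fin 3) (Fin 3) ℂ) n A ∧ (∀ i j, Res (A i j) (M i j)) ∧ w ᵥ* M = r

lemma row_one (w : Fin 8 → ZMod 3) : Row 1 0 w w := by
  refine ⟨1, 1, expands_one, fun i j => ?_, by simp⟩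
  by_cases h : i = j
  · subst h; simpa using Res.one
  · simpa [h] using Res.zero

lemma Row.mul {U V : GL (Fin 3) ℂ} {n k : ℕ} {w r : Fin 8 → ZMod 3} (hU : Row U n w r)
    {a b c : Matrix (Fin 8) (Fin 8) ℤ}
    (hV : Expands (V : Matrix (Fin 3) (Fin 3) ℂ) k (toR a b c)) :
    Row (U * V) (n + k) w (r ᵥ* toM a) := by
  obtain ⟨A, M, h1, h2, h3⟩ := hU
  refine ⟨A * toR a b c, M * toM a, ?_, fun i j => ?_, ?_⟩
  · exact h1.mul hV
  · simp only [Matrix.mul_apply]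
    exact Res.sum _ _ _ fun l => (h2 i l).mul (res_toR a b c l j)
  · rw [← Matrix.vecMul_vecMul, h3]

lemma vm8 (r : Fin 8 → ZMod 3) (M : Matrix (Fin 8) (Fin 8) (ZMod 3)) (j : Fin 8) :
    (r ᵥ* M) j = r 0 * M 0 j + r 1 * M 1 j + r 2 * M 2 j + r 3 * M 3 j + r 4 * M 4 j
      + r 5 * M 5 j + r 6 * M 6 j + r 7 * M 7 j := by
  simp [Matrix.vecMul, dotProduct, Fin.sum_univ_eight]

/-- The residue vectors supported on the `+` coordinates. -/
def pvec (a b c d : ZMod 3) : Fin 8 → ZMod 3 := ![a, b, c, d, 0, 0, 0, 0]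

lemma vec_H : ∀ a b c d : ZMod 3, pvec a b c d ᵥ* toM coHa = pvec b a d c := by
  intro a b c d
  have h3 : (3 : ZMod 3) = 0 := by decide
  funext j
  rw [vm8]
  fin_cases j <;> simp [pvec, toM, coHa] <;> revert a b c d <;> decide

lemma vec_S : ∀ a b c d : ZMod 3, pvec a b c d ᵥ* toM coSa = pvec a c d b := by
  intro a b c d
  funext j
  rw [vm8]
  fin_cases j <;> simp [pvec, toM, coSa] <;> revert a b c d <;> decide

lemma vec_T : ∀ a b c d : ZMod 3, pvec a b c d ᵥ* toM coTa
    = pvec 0 (2 * (b + c + d)) (2 * (b + c + d)) (2 * (b + c + d)) := by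
  intro a b c d
  funext j
  rw [vm8]
  fin_cases j <;> simp [pvec, toM, coTa] <;> revert a b c d <;> decide

lemma Row.H {U : GL (Fin 3) ℂ} {n : ℕ} {w : Fin 8 → ZMod 3} {a b c d : ZMod 3}
    (h : Row U n w (pvec a b c d)) : Row (U * Hg) n w (pvec b a d c) := by
  have := h.mul (V := Hg) expands_H
  rwa [vec_H] at this

lemma Row.S {U : GL (Fin 3) ℂ} {n : ℕ} {w : Fin 8 → ZMod 3} {a b c d : ZMod 3}
    (h : Row U n w (pvec a b c d)) : Row (U * Sg) n w (pvec a c d b) := by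
  have := h.mul (V := Sg) expands_S
  rwa [vec_S] at this

lemma Row.T {U : GL (Fin 3) ℂ} {n : ℕ} {w : Fin 8 → ZMod 3} {a b c d : ZMod 3}
    (h : Row U n w (pvec a b c d)) : Row (U * Tg) (n + 1) w
      (pvec 0 (2 * (b + c + d)) (2 * (b + c + d)) (2 * (b + c + d))) := by
  have := h.mul (V := Tg) expands_T
  rwa [vec_T] at this

lemma H_pow : Hg ^ 4 = 1 := by
  have h1 := omega_rel
  have hF : Fmat * Fmat * (Fmat * Fmat) = (9 : ℂ) • 1 := by
    have : Fmat * Fmat = !![3, 0, 0; 0, 0, 3; 0, 3, 0] := by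
      ext i j; fin_cases i <;> fin_cases j <;>
        simp [Fmat, Matrix.mul_apply, Fin.sum_univ_three] <;> grind
    rw [this]
    ext i j; fin_cases i <;> fin_cases j <;>
        simp [Matrix.mul_apply, Fin.sum_univ_three] <;> norm_num
  apply Units.ext
  have e : ((Hg ^ 4 : GL (Fin 3) ℂ) : Matrix (Fin 3) (Fin 3) ℂ)
      = ((I * (Real.sqrt 3 : ℂ))⁻¹ • Fmat) ^ 4 := rfl
  have e3 : Fmat ^ 4 = Fmat * Fmat * (Fmat * Fmat) := by
    rw [← pow_two, ← pow_two, ← pow_mul]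
  have e4 : (I * (Real.sqrt 3 : ℂ)) ^ 4 = 9 := by
    rw [mul_pow, Complex.I_pow_four, one_mul]
    calc (Real.sqrt 3 : ℂ) ^ 4 = ((Real.sqrt 3 : ℂ) ^ 2) ^ 2 := by ring
      _ = 9 := by rw [sqrt3_sq]; norm_num
  rw [e, smul_pow, e3, hF, inv_pow, e4, smul_smul]
  norm_num

lemma S_pow : Sg ^ 9 = 1 := by
  have h1 := omega_cube
  have h9 : ζ ^ 9 = 1 := by linear_combination (ζ ^ 3 - 1) * zeta_rel
  have hD : Dmat ^ 3 = 1 := by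
    rw [pow_succ, pow_two]
    ext i j; fin_cases i <;> fin_cases j <;>
        simp [Dmat, Matrix.mul_apply, Fin.sum_univ_three] <;> grind
  apply Units.ext
  have e : ((Sg ^ 9 : GL (Fin 3) ℂ) : Matrix (Fin 3) (Fin 3) ℂ) = (ζ ^ 8 • Dmat) ^ 9 := rfl
  rw [e, smul_pow, show 9 = 3 * 3 by norm_num, pow_mul Dmat, hD, one_pow]
  rw [← pow_mul, show 8 * (3 * 3) = 9 * 8 by norm_num, pow_mul, h9, one_pow, one_smul]
  rfl

/-- Nonzero residue rows survive Cliffords. -/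
lemma row_cliff {U : GL (Fin 3) ℂ} {n : ℕ} {w : Fin 8 → ZMod 3}
    (hU : ∃ a b c d : ZMod 3, ¬ (a = 0 ∧ b = 0 ∧ c = 0 ∧ d = 0) ∧ Row U n w (pvec a b c d))
    {g : GL (Fin 3) ℂ} (hg : g ∈ Cliff) :
    ∃ a b c d : ZMod 3, ¬ (a = 0 ∧ b = 0 ∧ c = 0 ∧ d = 0) ∧ Row (U * g) n w (pvec a b c d) := by
  have hH : ∀ V : GL (Fin 3) ℂ,
      (∃ a b c d : ZMod 3, ¬ (a = 0 ∧ b = 0 ∧ c = 0 ∧ d = 0) ∧ Row V n w (pvec a b c d)) →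
      ∃ a b c d : ZMod 3, ¬ (a = 0 ∧ b = 0 ∧ c = 0 ∧ d = 0) ∧ Row (V * Hg) n w (pvec a b c d) := by
    rintro V ⟨a, b, c, d, h, hr⟩
    exact ⟨b, a, d, c, by tauto, hr.H⟩
  have hS : ∀ V : GL (Fin 3) ℂ,
      (∃ a b c d : ZMod 3, ¬ (a = 0 ∧ b = 0 ∧ c = 0 ∧ d = 0) ∧ Row V n w (pvec a b c d)) →
      ∃ a b c d : ZMod 3, ¬ (a = 0 ∧ b = 0 ∧ c = 0 ∧ d = 0) ∧ Row (V * Sg) n w (pvec a b c d) := by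
    rintro V ⟨a, b, c, d, h, hr⟩
    exact ⟨a, c, d, b, by tauto, hr.S⟩
  have hHi : Hg⁻¹ = Hg ^ 3 := by
    apply inv_eq_of_mul_eq_one_right
    rw [← pow_succ', H_pow]
  have hSi : Sg⁻¹ = Sg ^ 8 := by
    apply inv_eq_of_mul_eq_one_right
    rw [← pow_succ', S_pow]
  rw [Cliff] at hg
  induction hg using Subgroup.closure_induction_right with
  | one => simpa using hU
  | mul_right x hx y hy ih =>
    rw [← mul_assoc]
    rcases hy with rfl | hy
    · exact hH _ ih
    · rw [Set.mem_singleton_iff] at hy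
      subst hy
      exact hS _ ih
  | mul_inv_cancel x hx y hy ih =>
    rw [← mul_assoc]
    rcases hy with rfl | hy
    · rw [hHi]
      simp only [pow_succ, pow_zero, one_mul, ← mul_assoc]
      exact hH _ (hH _ (hH _ ih))
    · rw [Set.mem_singleton_iff] at hy
      subst hy
      rw [hSi]
      simp only [pow_succ, pow_zero, one_mul, ← mul_assoc]
      exact hS _ (hS _ (hS _ (hS _ (hS _ (hS _ (hS _ (hS _ ih)))))))

lemma row_syllable {U : GL (Fin 3) ℂ} {n : ℕ} {w : Fin 8 → ZMod 3}
    (h : Row U n w (pvec 0 1 1 1)) {s : List Letter} (hs : s ∈ Syllables) :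
    Row (U * wordProd s) (n + 1) w (pvec 0 1 1 1) := by
  have e : (2 * (0 + 1 + 1) : ZMod 3) = 1 := by decide
  simp only [Syllables, Set.mem_insert_iff, Set.mem_singleton_iff] at hs
  rcases hs with rfl | rfl | rfl | rfl | rfl | rfl <;>
    simp only [wordProd, List.map_cons, List.map_nil, List.prod_cons, List.prod_nil, Letter.g,
      mul_one, ← mul_assoc]
  · simpa only [e] using h.H.T
  · simpa only [e] using h.H.H.H.T
  · simpa only [e] using h.S.H.T
  · simpa only [e] using h.S.H.H.H.T
  · simpa only [e] using h.S.S.H.T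
  · simpa only [e] using h.S.S.H.H.H.T

lemma wordProd_append (u v : List Letter) : wordProd (u ++ v) = wordProd u * wordProd v := by
  simp [wordProd]

lemma row_syllables {w : Fin 8 → ZMod 3} (ss : List (List Letter)) :
    ∀ (U : GL (Fin 3) ℂ) (n : ℕ), Row U n w (pvec 0 1 1 1) → (∀ s ∈ ss, s ∈ Syllables) →
    Row (U * wordProd ss.flatten) (ss.length + n) w (pvec 0 1 1 1) := by
  induction ss with
  | nil => intro U n h _; simpa [wordProd] using h
  | cons s ss ih =>
    intro U n h hs
    rw [List.flatten_cons, wordProd_append, ← mul_assoc, List.length_cons,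
      show ss.length + 1 + n = ss.length + (n + 1) by ring]
    exact ih _ _ (row_syllable h (hs s (by simp))) fun t ht => hs t (by simp [ht])

lemma row_prefix {p : List Letter} (hp : p ∈ Prefixes) :
    ∃ a b c d : ZMod 3, Row (wordProd p) (if p = [] then 0 else 1) (pvec a b c d) (pvec 0 1 1 1) := by
  have e : (2 * (2 + 0 + 0) : ZMod 3) = 1 := by decide
  simp only [Prefixes, Set.mem_insert_iff, Set.mem_singleton_iff] at hp
  have h0 := row_one (pvec 0 2 0 0)
  rcases hp with rfl | rfl | rfl
  · exact ⟨0, 1, 1, 1, by simpa [wordProd] using row_one _⟩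
  · refine ⟨0, 2, 0, 0, ?_⟩
    have := h0.T
    rw [e] at this
    simpa [wordProd, Letter.g] using this
  · refine ⟨0, 2, 0, 0, ?_⟩
    have := h0.H.H.T
    rw [e] at this
    simpa [wordProd, Letter.g, mul_assoc] using this

/-- If U is the product of a canonical form of T-count n, then the
least denominator exponent of the quadrant Û₊₊ of its adjoint representation is
exactly 2n. -/
theorem LDE_of_canonical_form
    (p : List Letter) (ss : List (List Letter)) (c : GL (Fin 3) ℂ)
    (hp : p ∈ Prefixes) (hss : ∀ s ∈ ss, s ∈ Syllables) (hc : c ∈ Cliff)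
    (U : GL (Fin 3) ℂ) (hU : U = wordProd (p ++ ss.flatten) * c)
    (n : ℕ) (hn : n = TCount p ss) :
    IsLeast {k : ℕ | ∀ i j : Fin 4,
      αR ^ k * blockPP (adj (U : Matrix (Fin 3) (Fin 3) ℂ)) i j ∈ Zα} (2 * n) := by
  obtain ⟨a, b, c', d, h0⟩ := row_prefix hp
  have h1 := row_syllables ss _ _ h0 hss
  obtain ⟨a', b', c'', d', hne, A, M, hA, hAM, hr⟩ := row_cliff
    ⟨0, 1, 1, 1, by decide, h1⟩ hc
  rw [← wordProd_append, ← hU] at hA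
  have hn' : ss.length + (if p = [] then 0 else 1) = n := by rw [hn, TCount]
  rw [hn'] at hA
  constructor
  · intro i j
    rw [block_eq hA]
    exact (hAM _ _).mem
  · intro k hk
    by_contra hlt
    push Not at hlt
    have hz : ∀ i j : Fin 4, M ⟨i.val, by omega⟩ ⟨j.val, by omega⟩ = 0 := by
      intro i j
      refine (hAM _ _).unique ⟨αR ^ (2 * n - k - 1) * (αR ^ k * blockPP (adj U) i j),
        mul_mem (pow_mem alpha_mem_Zα _) (hk i j), ?_⟩
      rw [← block_eq hA i j, ← mul_assoc, ← mul_assoc, ← pow_succ', ← pow_add]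
      congr 2
      omega
    have hj : ∀ j : Fin 4, pvec a' b' c'' d' ⟨j.val, by omega⟩ = 0 := by
      intro j
      have z0 := hz 0 j
      have z1 := hz 1 j
      have z2 := hz 2 j
      have z3 := hz 3 j
      rw [← hr, vm8]
      change M 0 _ = 0 at z0
      change M 1 _ = 0 at z1
      change M 2 _ = 0 at z2
      change M 3 _ = 0 at z3
      rw [z0, z1, z2, z3]
      simp [pvec]
    exact hne ⟨hj 0, hj 1, hj 2, hj 3⟩

end
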